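/- There exists an absolute constant C > 0 such that for every θ ∈ (0,1) and every positive integer n, ∫_{A} G(s,t,u,v) ds dt du dv ≤ C · n^{2-θ} θ^{-1} (1-θ)^{-3}, and there exists an absolute constant c > 0 such that this integral is ≥ c · n^{2-θ} θ^{-1} (1-θ)^{-3} whenever additionally n^{1-θ} ≥ 8; here A = { (s,t,u,v) ∈ (0,∞)⁴ : 0 < u < 1, n^{-1/2} ≤ v < 1, t < n^{1/4}, s ≥ u^{1/2} v^{1/2} t }. -/

import Mathlib

open MeasureTheory Set Real

/-- The integrand `G(s,t,u,v)` from the paper's computation of the completely 1-summing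
norm of the identity `OH_n → ℓ^n_p`, with `θ = 2/p'`. Here `p = (s, t, u, v)`. -/
noncomputable def G (θ : ℝ) (n : ℕ) (p : ℝ × ℝ × ℝ × ℝ) : ℝ :=
  (n : ℝ) ^ (2 : ℕ) * p.1 ^ (-1 - 2 * θ) * p.2.1 ^ (-1 - 2 * θ) *
    min (min (min ((n : ℝ)⁻¹ * p.1 ^ (4 : ℝ) * p.2.2.1 ^ (-2 : ℝ) * p.2.2.2 ^ (-2 : ℝ))
                  ((n : ℝ)⁻¹ * p.2.1 ^ (4 : ℝ)))
             (min (p.1 ^ (4 : ℝ) * p.2.2.1 ^ (-2 : ℝ)) (p.2.1 ^ (4 : ℝ) * p.2.2.2 ^ (-2 : ℝ))))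
        (min (min (p.2.2.1 ^ (-2 : ℝ) * p.2.2.2 ^ (-2 : ℝ)) (p.2.2.1 ^ (-2 : ℝ)))
             (min 1 (p.2.2.2 ^ (-2 : ℝ))))

/-- The region of integration. -/
def A (n : ℕ) : Set (ℝ × ℝ × ℝ × ℝ) :=
  {p | 0 < p.1 ∧ 0 < p.2.1 ∧ 0 < p.2.2.1 ∧ 0 < p.2.2.2 ∧ p.2.2.1 < 1 ∧ (n : ℝ) ^ (-(1/2) : ℝ) ≤ p.2.2.2 ∧ p.2.2.2 < 1 ∧ p.2.1 < (n : ℝ) ^ ((1:ℝ)/4) ∧ p.2.2.1 ^ ((1:ℝ)/2) * p.2.2.2 ^ ((1:ℝ)/2) * p.2.1 ≤ p.1}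

lemma A_min {n : ℕ} (hn : 0 < n) (θ : ℝ) (p : ℝ × ℝ × ℝ × ℝ) (hp : p ∈ A n) :
    G θ n p = (n : ℝ) * p.1 ^ (-1 - 2 * θ) * p.2.1 ^ (3 - 2 * θ) := by
  obtain ⟨s, t, u, v⟩ := p
  obtain ⟨hs, ht, hu, hv, hu1, hvn, hv1, htn, hst⟩ := hp
  simp only at hs ht hu hv hu1 hvn hv1 htn hst
  have hn0 : (0 : ℝ) < n := by exact_mod_cast hn
  have hn1 : (1 : ℝ) ≤ n := by exact_mod_cast hn
  have hni : (n : ℝ)⁻¹ ≤ 1 := inv_le_one_of_one_le₀ hn1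
  have hni0 : 0 < (n : ℝ)⁻¹ := by positivity
  have key : (n : ℝ)⁻¹ ≤ v ^ (2 : ℝ) := by
    have h := Real.rpow_le_rpow (by positivity) hvn (by norm_num : (0 : ℝ) ≤ 2)
    rw [← Real.rpow_mul hn0.le] at h
    norm_num at h
    rw [Real.rpow_neg_one] at h
    simpa using h
  have ht4 : t ^ (4 : ℝ) ≤ n := by
    have h := Real.rpow_le_rpow ht.le htn.le (by norm_num : (0 : ℝ) ≤ 4)
    rw [← Real.rpow_mul hn0.le] at h
    norm_num at h
    simpa using h
  have hs4 : u ^ (2 : ℝ) * v ^ (2 : ℝ) * t ^ (4 : ℝ) ≤ s ^ (4 : ℝ) := by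
    have h := Real.rpow_le_rpow (by positivity) hst (by norm_num : (0 : ℝ) ≤ 4)
    rw [Real.mul_rpow (by positivity) ht.le, Real.mul_rpow (by positivity) (by positivity),
      ← Real.rpow_mul hu.le, ← Real.rpow_mul hv.le] at h
    norm_num at h ⊢
    exact h
  have e1 : t ^ (-1 - 2 * θ) * t ^ (4 : ℝ) = t ^ (3 - 2 * θ) := by
    rw [← Real.rpow_add ht]; congr 1; ring
  have hum : u ^ (-2 : ℝ) = (u ^ (2 : ℝ))⁻¹ := Real.rpow_neg hu.le 2
  have hvm : v ^ (-2 : ℝ) = (v ^ (2 : ℝ))⁻¹ := Real.rpow_neg hv.le 2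
  have hU0 : 0 < u ^ (2 : ℝ) := by positivity
  have hV0 : 0 < v ^ (2 : ℝ) := by positivity
  have hT0 : 0 < t ^ (4 : ℝ) := by positivity
  have hU1 : u ^ (2 : ℝ) ≤ 1 := Real.rpow_le_one hu.le hu1.le (by norm_num)
  have hV1 : v ^ (2 : ℝ) ≤ 1 := Real.rpow_le_one hv.le hv1.le (by norm_num)
  have hUi : 1 ≤ (u ^ (2 : ℝ))⁻¹ := (one_le_inv₀ hU0).2 hU1
  have hVi : 1 ≤ (v ^ (2 : ℝ))⁻¹ := (one_le_inv₀ hV0).2 hV1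
  have hle1 : (n : ℝ)⁻¹ * t ^ (4 : ℝ) ≤ 1 := by
    rw [inv_mul_le_iff₀ hn0]; simpa using ht4
  have b1 : (n : ℝ)⁻¹ * t ^ (4 : ℝ) ≤
      (n : ℝ)⁻¹ * s ^ (4 : ℝ) * (u ^ (2 : ℝ))⁻¹ * (v ^ (2 : ℝ))⁻¹ := by
    rw [mul_assoc, mul_assoc]
    refine mul_le_mul_of_nonneg_left ?_ hni0.le
    rw [← mul_inv, ← div_eq_mul_inv, le_div_iff₀ (by positivity)]
    linarith
  have b3 : (n : ℝ)⁻¹ * t ^ (4 : ℝ) ≤ s ^ (4 : ℝ) * (u ^ (2 : ℝ))⁻¹ := by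
    rw [← div_eq_mul_inv, le_div_iff₀ hU0]
    refine le_trans ?_ hs4
    have := mul_le_mul_of_nonneg_right key (mul_pos hT0 hU0).le
    linarith
  have b4 : (n : ℝ)⁻¹ * t ^ (4 : ℝ) ≤ t ^ (4 : ℝ) * (v ^ (2 : ℝ))⁻¹ := by
    have := mul_le_mul_of_nonneg_left (hni.trans hVi) hT0.le
    linarith
  have b5 : (n : ℝ)⁻¹ * t ^ (4 : ℝ) ≤ (u ^ (2 : ℝ))⁻¹ * (v ^ (2 : ℝ))⁻¹ :=
    hle1.trans (one_le_mul_of_one_le_of_one_le hUi hVi)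
  simp only [G]
  rw [hum, hvm, min_eq_left (a := min _ _), min_eq_left (a := min _ _), min_eq_right b1]
  · rw [← e1]; field_simp
  · rw [min_eq_right b1]; exact le_min b3 b4
  · rw [min_eq_left (a := min _ _), min_eq_right b1]
    · exact le_min (le_min b5 (hle1.trans hUi)) (le_min hle1 (hle1.trans hVi))
    · rw [min_eq_right b1]; exact le_min b3 b4

lemma lint_rpow {a b r : ℝ} (ha : 0 ≤ a) (hab : a ≤ b) (hr : -1 < r) :
    ∫⁻ x in Ioc a b, ENNReal.ofReal (x ^ r) =
      ENNReal.ofReal ((b ^ (r + 1) - a ^ (r + 1)) / (r + 1)) := by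
  rw [← integral_rpow (Or.inl hr), intervalIntegral.integral_of_le hab]
  rw [ofReal_integral_eq_lintegral_ofReal]
  · exact (intervalIntegral.intervalIntegrable_rpow' hr).1
  · filter_upwards [ae_restrict_mem measurableSet_Ioc] with x hx
    exact Real.rpow_nonneg (ha.trans hx.1.le) _

lemma lint_tail {c θ : ℝ} (hc : 0 < c) (hθ : 0 < θ) :
    ∫⁻ x in Ici c, ENNReal.ofReal (x ^ (-1 - 2 * θ)) =
      ENNReal.ofReal (c ^ (-2 * θ) / (2 * θ)) := by
  have hr : -1 - 2 * θ < -1 := by linarith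
  rw [setLIntegral_congr Ioi_ae_eq_Ici.symm, ← ofReal_integral_eq_lintegral_ofReal]
  · rw [integral_Ioi_rpow_of_lt hr hc]
    congr 1
    rw [show -1 - 2 * θ + 1 = -2 * θ by ring, show -2 * θ = -(2 * θ) by ring, neg_div_neg_eq]
  · exact integrableOn_Ioi_rpow_of_lt hr hc
  · filter_upwards [ae_restrict_mem measurableSet_Ioi] with x hx
    exact Real.rpow_nonneg (hc.le.trans (le_of_lt hx)) _

lemma measA (n : ℕ) : MeasurableSet (A n) := by
  unfold A
  simp only [setOf_and]
  repeat' apply MeasurableSet.inter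
  all_goals first
    | exact measurableSet_lt (by fun_prop) (by fun_prop)
    | exact measurableSet_le (by fun_prop) (by fun_prop)

lemma inner_eq {n : ℕ} {θ : ℝ} (hθ : 0 < θ) (q : ℝ × ℝ × ℝ) :
    ∫⁻ s, (A n).indicator (fun p => ENNReal.ofReal
        ((n : ℝ) * p.1 ^ (-1 - 2 * θ) * p.2.1 ^ (3 - 2 * θ))) (s, q) =
      ENNReal.ofReal ((n : ℝ) / (2 * θ)) *
      ((Ioo 0 ((n : ℝ) ^ ((1 : ℝ) / 4))).indicator
          (fun t => ENNReal.ofReal (t ^ (3 - 4 * θ))) q.1 *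
        ((Ioo (0 : ℝ) 1).indicator (fun u => ENNReal.ofReal (u ^ (-θ))) q.2.1 *
          (Ico ((n : ℝ) ^ (-(1 / 2) : ℝ)) 1 ∩ Ioi 0).indicator
            (fun v => ENNReal.ofReal (v ^ (-θ))) q.2.2)) := by
  obtain ⟨t, u, v⟩ := q
  by_cases h : t ∈ Ioo 0 ((n : ℝ) ^ ((1 : ℝ) / 4)) ∧ u ∈ Ioo (0 : ℝ) 1 ∧
      v ∈ Ico ((n : ℝ) ^ (-(1 / 2) : ℝ)) 1 ∩ Ioi 0
  · obtain ⟨h1, h2, h3⟩ := h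
    rw [indicator_of_mem h1, indicator_of_mem h2, indicator_of_mem h3]
    have ht : 0 < t := h1.1
    have hu : 0 < u := h2.1
    have hv : 0 < v := h3.2
    have hc : 0 < u ^ ((1 : ℝ) / 2) * v ^ ((1 : ℝ) / 2) * t := by positivity
    have : ∀ s, (A n).indicator (fun p : ℝ × ℝ × ℝ × ℝ => ENNReal.ofReal
        ((n : ℝ) * p.1 ^ (-1 - 2 * θ) * p.2.1 ^ (3 - 2 * θ))) (s, t, u, v) =
        (Ici (u ^ ((1 : ℝ) / 2) * v ^ ((1 : ℝ) / 2) * t)).indicator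
          (fun s => ENNReal.ofReal ((n : ℝ) * t ^ (3 - 2 * θ)) *
            ENNReal.ofReal (s ^ (-1 - 2 * θ))) s := by
      intro s
      by_cases hs : s ∈ Ici (u ^ ((1 : ℝ) / 2) * v ^ ((1 : ℝ) / 2) * t)
      · have hA : (s, t, u, v) ∈ A n :=
          ⟨lt_of_lt_of_le hc hs, ht, hu, hv, h2.2, h3.1.1, h3.1.2, h1.2, hs⟩
        rw [indicator_of_mem hs, indicator_of_mem hA, ← ENNReal.ofReal_mul (by positivity)]
        congr 1
        ring
      · have hA : (s, t, u, v) ∉ A n := fun hA => hs hA.2.2.2.2.2.2.2.2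
        rw [indicator_of_notMem hs, indicator_of_notMem hA]
    simp_rw [this]
    rw [lintegral_indicator measurableSet_Ici, lintegral_const_mul _ (by fun_prop),
      lint_tail hc hθ, ← ENNReal.ofReal_mul (by positivity), ← ENNReal.ofReal_mul (by positivity),
      ← ENNReal.ofReal_mul (by positivity), ← ENNReal.ofReal_mul (by positivity)]
    congr 1
    rw [Real.mul_rpow (by positivity) ht.le, Real.mul_rpow (by positivity) (by positivity),
      ← Real.rpow_mul hu.le, ← Real.rpow_mul hv.le,
      show (1 : ℝ) / 2 * (-2 * θ) = -θ by ring,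
      show 3 - 4 * θ = (3 - 2 * θ) + (-2 * θ) by ring, Real.rpow_add ht]
    ring
  · have : ∀ s, (A n).indicator (fun p : ℝ × ℝ × ℝ × ℝ => ENNReal.ofReal
        ((n : ℝ) * p.1 ^ (-1 - 2 * θ) * p.2.1 ^ (3 - 2 * θ))) (s, t, u, v) = 0 := by
      intro s
      refine indicator_of_notMem (fun hA => h ?_) _
      obtain ⟨hs, ht, hu, hv, hu1, hvn, hv1, htn, hst⟩ := hA
      exact ⟨⟨ht, htn⟩, ⟨hu, hu1⟩, ⟨hvn, hv1⟩, hv⟩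
    simp_rw [this]
    rw [lintegral_zero]
    symm
    by_cases h1 : t ∈ Ioo 0 ((n : ℝ) ^ ((1 : ℝ) / 4))
    · by_cases h2 : u ∈ Ioo (0 : ℝ) 1
      · have h3 : v ∉ Ico ((n : ℝ) ^ (-(1 / 2) : ℝ)) 1 ∩ Ioi 0 := fun h3 => h ⟨h1, h2, h3⟩
        simp only [indicator_of_notMem h3, mul_zero]
      · simp only [indicator_of_notMem h2, zero_mul, mul_zero]
    · simp only [indicator_of_notMem h1, zero_mul, mul_zero]

lemma exact_value {n : ℕ} (hn : 0 < n) {θ : ℝ} (hθ : 0 < θ) (hθ1 : θ < 1) :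
    ∫ p in A n, G θ n p =
      (n : ℝ) ^ (2 - θ) * θ ^ (-1 : ℝ) * (1 - θ) ^ (-3 : ℝ) *
        ((1 - (n : ℝ) ^ (-(1 - θ) / 2)) / 8) := by
  have hn0 : (0 : ℝ) < n := by exact_mod_cast hn
  have hn1 : (1 : ℝ) ≤ n := by exact_mod_cast hn
  have hθ' : 0 < 1 - θ := by linarith
  have hN : (n : ℝ) ^ (-(1 / 2) : ℝ) ≤ 1 := Real.rpow_le_one_of_one_le_of_nonpos hn1 (by norm_num)
  have hN0 : 0 < (n : ℝ) ^ (-(1 / 2) : ℝ) := by positivity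
  have hx : (n : ℝ) ^ (-(1 - θ) / 2) ≤ 1 :=
    Real.rpow_le_one_of_one_le_of_nonpos hn1 (by linarith)
  rw [setIntegral_congr_fun (measA n) (fun p hp => A_min hn θ p hp)]
  rw [integral_eq_lintegral_of_nonneg_ae]
  rotate_left
  · filter_upwards [ae_restrict_mem (measA n)] with p hp
    have h1 : 0 < p.1 := hp.1
    have h2 : 0 < p.2.1 := hp.2.1
    simp only [Pi.zero_apply]
    positivity
  · exact Measurable.aestronglyMeasurable (by fun_prop)
  rw [← lintegral_indicator (measA n)]
  have hm : Measurable ((A n).indicator (fun p : ℝ × ℝ × ℝ × ℝ => ENNReal.ofReal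
        ((n : ℝ) * p.1 ^ (-1 - 2 * θ) * p.2.1 ^ (3 - 2 * θ)))) :=
    Measurable.indicator (by fun_prop) (measA n)
  have m1 : Measurable ((Ioo 0 ((n : ℝ) ^ ((1 : ℝ) / 4))).indicator
          (fun t => ENNReal.ofReal (t ^ (3 - 4 * θ)))) :=
    Measurable.indicator (by fun_prop) measurableSet_Ioo
  have m2 : Measurable ((Ioo (0 : ℝ) 1).indicator (fun u => ENNReal.ofReal (u ^ (-θ)))) :=
    Measurable.indicator (by fun_prop) measurableSet_Ioo
  have m3 : Measurable ((Ico ((n : ℝ) ^ (-(1 / 2) : ℝ)) 1 ∩ Ioi 0).indicator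
            (fun v => ENNReal.ofReal (v ^ (-θ)))) :=
    Measurable.indicator (by fun_prop) (measurableSet_Ico.inter measurableSet_Ioi)
  rw [Measure.volume_eq_prod, lintegral_prod_symm' _ hm]
  simp_rw [inner_eq hθ]
  rw [lintegral_const_mul _ (by fun_prop), Measure.volume_eq_prod,
    lintegral_prod_mul (f := (Ioo 0 ((n : ℝ) ^ ((1 : ℝ) / 4))).indicator
          (fun t => ENNReal.ofReal (t ^ (3 - 4 * θ))))
      (g := fun q : ℝ × ℝ => ((Ioo (0 : ℝ) 1).indicator (fun u => ENNReal.ofReal (u ^ (-θ))) q.1 *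
          (Ico ((n : ℝ) ^ (-(1 / 2) : ℝ)) 1 ∩ Ioi 0).indicator
            (fun v => ENNReal.ofReal (v ^ (-θ))) q.2)) (by fun_prop) (by fun_prop),
    Measure.volume_eq_prod, lintegral_prod_mul (by fun_prop) (by fun_prop)]
  have hI : Ico ((n : ℝ) ^ (-(1 / 2) : ℝ)) 1 ∩ Ioi 0 = Ico ((n : ℝ) ^ (-(1 / 2) : ℝ)) 1 :=
    inter_eq_left.2 (fun x hx => hN0.trans_le hx.1)
  rw [hI, lintegral_indicator measurableSet_Ioo, lintegral_indicator measurableSet_Ioo,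
    lintegral_indicator measurableSet_Ico, setLIntegral_congr Ioo_ae_eq_Ioc,
    setLIntegral_congr Ioo_ae_eq_Ioc, setLIntegral_congr Ico_ae_eq_Ioc,
    lint_rpow le_rfl (by positivity) (by linarith), lint_rpow le_rfl (by norm_num) (by linarith),
    lint_rpow hN0.le hN (by linarith)]
  have e1 : ((n : ℝ) ^ ((1 : ℝ) / 4)) ^ (3 - 4 * θ + 1) = (n : ℝ) ^ (1 - θ) := by
    rw [← Real.rpow_mul hn0.le]; congr 1; ring
  have e2 : ((n : ℝ) ^ (-(1 / 2) : ℝ)) ^ (-θ + 1) = (n : ℝ) ^ (-(1 - θ) / 2) := by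
    rw [← Real.rpow_mul hn0.le]; congr 1; ring
  have e3 : (0 : ℝ) ^ (3 - 4 * θ + 1) = 0 := Real.zero_rpow (by linarith)
  have e4 : (0 : ℝ) ^ (-θ + 1) = 0 := Real.zero_rpow (by linarith)
  have e5 : (n : ℝ) ^ (2 - θ) = n * (n : ℝ) ^ (1 - θ) := by
    rw [show 2 - θ = 1 + (1 - θ) by ring, Real.rpow_add hn0, Real.rpow_one]
  have e6 : (1 - θ) ^ (-3 : ℝ) = ((1 - θ) ^ 3)⁻¹ := by
    rw [Real.rpow_neg hθ'.le]; norm_cast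
  rw [e1, e2, e3, e4, e5, e6, Real.rpow_neg_one, Real.one_rpow, ENNReal.toReal_mul,
    ENNReal.toReal_mul, ENNReal.toReal_mul, show 3 - 4 * θ + 1 = 4 * (1 - θ) by ring,
    show -θ + 1 = 1 - θ by ring, ENNReal.toReal_ofReal (by positivity),
    ENNReal.toReal_ofReal (by rw [sub_zero]; positivity),
    ENNReal.toReal_ofReal (by rw [sub_zero]; positivity),
    ENNReal.toReal_ofReal (div_nonneg (by linarith) hθ'.le)]
  field_simp
  ring

theorem stmt_9 :
    (∃ C : ℝ, 0 < C ∧ ∀ θ : ℝ, 0 < θ → θ < 1 → ∀ n : ℕ, 0 < n →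
      (∫ p in A n, G θ n p) ≤ C * ((n : ℝ) ^ (2 - θ) * θ ^ (-1 : ℝ) * (1 - θ) ^ (-3 : ℝ))) ∧
    (∃ c : ℝ, 0 < c ∧ ∀ θ : ℝ, 0 < θ → θ < 1 → ∀ n : ℕ, 0 < n →
      (8 : ℝ) ≤ (n : ℝ) ^ (1 - θ) →
      c * ((n : ℝ) ^ (2 - θ) * θ ^ (-1 : ℝ) * (1 - θ) ^ (-3 : ℝ)) ≤ ∫ p in A n, G θ n p) := by
  refine ⟨⟨1, one_pos, ?_⟩, ⟨1 / 16, by norm_num, ?_⟩⟩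
  · intro θ hθ hθ1 n hn
    have hn0 : (0 : ℝ) < n := by exact_mod_cast hn
    have hθ' : 0 < 1 - θ := by linarith
    rw [exact_value hn hθ hθ1, mul_comm]
    refine mul_le_mul_of_nonneg_right ?_ (by positivity)
    have : 0 < (n : ℝ) ^ (-(1 - θ) / 2) := by positivity
    linarith
  · intro θ hθ hθ1 n hn h8
    have hn0 : (0 : ℝ) < n := by exact_mod_cast hn
    have hθ' : 0 < 1 - θ := by linarith
    rw [exact_value hn hθ hθ1, mul_comm]
    refine mul_le_mul_of_nonneg_left ?_ (by positivity)
    have hy : 0 < (n : ℝ) ^ (-(1 - θ) / 2) := by positivity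
    have hyy : (n : ℝ) ^ (-(1 - θ) / 2) * (n : ℝ) ^ (-(1 - θ) / 2) * (n : ℝ) ^ (1 - θ) = 1 := by
      rw [← Real.rpow_add hn0, ← Real.rpow_add hn0]
      ring_nf
      exact Real.rpow_zero _
    have : (n : ℝ) ^ (-(1 - θ) / 2) ≤ 1 / 2 := by
      by_contra! hc
      nlinarith [mul_pos hy hy]
    linarith
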